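/- arXiv:2201.05181 — 3 statements merged into one kernel-verified Lean document; each statement's English description precedes it below -/
import Mathlib

section
/- Let $G$ be a simple graph on $n$ vertices with maximum degree at most $\Delta$. For any integer $t \ge 3$, if $n = a(\Delta+1)+b$ where $a, b$ are integers with $a \ge 0$ and $0 \le b \le \Delta$, then the number of $t$-cliques of $G$ satisfies $k_t(G) \le a\binom{\Delta+1}{t}+\binom{b}{t}$. -/
/-!
Induct on the number of vertices by deleting a closed neighborhood `N[v]`. The `t`-cliques lost are
those meeting `N[v]`, and it suffices to find `v` for which there are at most `(deg v + 1).choose t`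
of them, the number of all `t`-subsets of `N[v]`. Such a `v` exists by averaging. Indeed, a clique
that meets `N[v]` either lies inside `N[v]` or straddles it, while a `t`-subset of `N[v]` that is
not a clique may be taken inside `N(v)`; so it is enough that the pairs (vertex `v`, clique
straddling `N[v]`) are at most as many as the pairs (vertex `v`, non-clique in `N(v)`). Both kinds
of pairs `(v, T)` are grouped by the `(t + 1)`-set `S = T ∪ {v}`, and the inequality holds for each
`S` separately. Convexity of the binomial coefficient then closes the induction.
-/

open Finset

section Binomial

theorem choose_add_choose_le_choose_add_choose {k l m n : ℕ} (hkm : k ≤ m) (hkn : k ≤ n)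
    (h : m + n = k + l) (t : ℕ) : m.choose t + n.choose t ≤ k.choose t + l.choose t := by
  obtain ⟨i, rfl⟩ := Nat.exists_eq_add_of_le hkm
  obtain ⟨j, rfl⟩ := Nat.exists_eq_add_of_le hkn
  obtain rfl : l = k + j + i := by omega
  clear h hkm hkn
  cases t with
  | zero => simp only [Nat.choose_zero_right, le_refl]
  | succ t =>
    induction i with
    | zero => exact le_rfl
    | succ i ih =>
      have pascal (p : ℕ) : (p + (i + 1)).choose (t + 1) =
          (p + i).choose t + (p + i).choose (t + 1) := Nat.choose_succ_succ _ _
      have mono : (k + i).choose t ≤ (k + j + i).choose t := Nat.choose_le_choose t (by omega)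
      have := pascal k
      have := pascal (k + j)
      omega

/-- The number of `t`-cliques (for `t ≠ 0`) in the extremal graph on `n` vertices: the disjoint
union of `n / d` complete graphs on `d` vertices and one on the remaining `n % d` vertices. -/
def cliqueUnionCount (d t n : ℕ) : ℕ :=
  n / d * d.choose t + (n % d).choose t

theorem cliqueUnionCount_mul_add {d r : ℕ} (hr : r < d) (t a : ℕ) :
    cliqueUnionCount d t (a * d + r) = a * d.choose t + r.choose t := by
  rw [cliqueUnionCount, Nat.mul_add_mod_of_lt hr, Nat.mul_comm a d,
    Nat.mul_add_div (by omega), Nat.div_eq_of_lt hr, Nat.add_zero]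

theorem choose_add_cliqueUnionCount_le {d s t : ℕ} (ht : t ≠ 0) (hs : s ≤ d) (n : ℕ) :
    s.choose t + cliqueUnionCount d t n ≤ cliqueUnionCount d t (n + s) := by
  obtain rfl | hd := d.eq_zero_or_pos
  · obtain rfl : s = 0 := by omega
    simp [Nat.choose_eq_zero_of_lt (Nat.pos_of_ne_zero ht)]
  obtain ⟨q, r, hr, rfl⟩ : ∃ q r, r < d ∧ n = q * d + r :=
    ⟨n / d, n % d, Nat.mod_lt n hd, (Nat.div_add_mod' n d).symm⟩
  rw [cliqueUnionCount_mul_add hr]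
  obtain hrs | hrs := lt_or_ge (r + s) d
  · rw [add_assoc, cliqueUnionCount_mul_add hrs]
    have := choose_add_choose_le_choose_add_choose r.zero_le s.zero_le (zero_add (r + s)).symm t
    have := Nat.choose_eq_zero_of_lt (Nat.pos_of_ne_zero ht)
    omega
  · rw [show q * d + r + s = (q + 1) * d + (r + s - d) by rw [add_one_mul]; omega,
      cliqueUnionCount_mul_add (by omega), add_one_mul]
    have := choose_add_choose_le_choose_add_choose (k := r + s - d) (l := d) (m := r) (n := s)
      (by omega) (by omega) (by omega) t
    omega

end Binomial

theorem sum_card_eq_sum_card_filter_erase_mem {α : Type*} [Fintype α] [DecidableEq α]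
    {𝒜 : α → Finset (Finset α)} (h𝒜 : ∀ v, ∀ T ∈ 𝒜 v, v ∉ T) :
    ∑ v, #(𝒜 v) = ∑ S : Finset α, #{v ∈ S | S.erase v ∈ 𝒜 v} := by
  rw [← card_sigma, ← card_sigma]
  refine card_nbij' (fun p ↦ ⟨insert p.1 p.2, p.1⟩) (fun p ↦ ⟨p.2, p.1.erase p.2⟩) ?_ ?_ ?_ ?_
  · rintro ⟨v, T⟩ hT
    have hT : T ∈ 𝒜 v := by simpa using hT
    simpa [erase_insert (h𝒜 v T hT)] using hT
  · rintro ⟨S, v⟩ hS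
    simp_all
  · rintro ⟨v, T⟩ hT
    have hT : T ∈ 𝒜 v := by simpa using hT
    simp only [erase_insert (h𝒜 v T hT)]
  · rintro ⟨S, v⟩ hS
    have hv : v ∈ S := by simp_all
    simp only [insert_erase hv]

theorem eq_or_eq_of_isClique_erase {V : Type*} [DecidableEq V] {G : SimpleGraph V} {S : Finset V}
    {u w z : V} (hu : u ∈ S) (hw : w ∈ S) (huw : u ≠ w) (hnadj : ¬ G.Adj u w)
    (hz : G.IsClique (S.erase z : Set V)) : z = u ∨ z = w := by
  by_contra! h
  exact hnadj (hz (by simp [hu, h.1.symm]) (by simp [hw, h.2.symm]) huw)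

section Cliques

variable {V : Type*} [Fintype V] [DecidableEq V] (G : SimpleGraph V) [DecidableRel G.Adj]

/-- The closed neighborhood `N[v]` of a vertex. -/
def closedNeighborFinset (v : V) : Finset V :=
  insert v (G.neighborFinset v)

/-- The `t`-cliques that meet `N[v]` without being contained in it. -/
def straddlingCliques (t : ℕ) (v : V) : Finset (Finset V) :=
  {T ∈ G.cliqueFinset t |
    ¬ Disjoint T (closedNeighborFinset G v) ∧ ¬ T ⊆ closedNeighborFinset G v}

/-- The `t`-subsets of the open neighborhood of `v` that are not cliques. -/
def neighborNoncliques (t : ℕ) (v : V) : Finset (Finset V) :=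
  {T ∈ (G.neighborFinset v).powersetCard t | ¬ G.IsClique (T : Set V)}

variable {G} {t : ℕ} {v z : V} {S T : Finset V}

theorem mem_closedNeighborFinset {w : V} :
    w ∈ closedNeighborFinset G v ↔ w = v ∨ G.Adj v w := by
  simp [closedNeighborFinset]

theorem card_closedNeighborFinset : #(closedNeighborFinset G v) = G.degree v + 1 := by
  rw [closedNeighborFinset, card_insert_of_notMem (G.notMem_neighborFinset_self v),
    G.card_neighborFinset_eq_degree]

theorem notMem_of_mem_straddlingCliques (hT : T ∈ straddlingCliques G t v) : v ∉ T := by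
  simp only [straddlingCliques, mem_filter, SimpleGraph.mem_cliqueFinset_iff] at hT
  intro hv
  refine hT.2.2 fun x hx ↦ mem_closedNeighborFinset.2 (or_iff_not_imp_left.2 fun hxv ↦ ?_)
  exact hT.1.isClique hv hx (Ne.symm hxv)

theorem notMem_of_mem_neighborNoncliques (hT : T ∈ neighborNoncliques G t v) : v ∉ T := by
  simp only [neighborNoncliques, mem_filter, mem_powersetCard] at hT
  exact fun hv ↦ G.notMem_neighborFinset_self v (hT.1.1 hv)

theorem mem_straddlingCliques_iff_of_notMem (hv : v ∉ T) :
    T ∈ straddlingCliques G t v ↔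
      G.IsNClique t T ∧ (∃ x ∈ T, G.Adj v x) ∧ ∃ x ∈ T, ¬ G.Adj v x := by
  have hne : ∀ x ∈ T, x ≠ v := fun x hx hxv ↦ hv (hxv ▸ hx)
  simp only [straddlingCliques, mem_filter, SimpleGraph.mem_cliqueFinset_iff, not_disjoint_iff,
    not_subset, mem_closedNeighborFinset]
  grind

theorem erase_mem_neighborNoncliques (hzS : z ∈ S) (hz : S.erase z ∈ straddlingCliques G t z)
    {y : V} (hyS : y ∈ S) (hzy : G.Adj z y) : S.erase y ∈ neighborNoncliques G t y := by
  obtain ⟨⟨hclique, hcard⟩, -, w, hw, hzw⟩ :=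
    (mem_straddlingCliques_iff_of_notMem (notMem_erase z S)).1 hz
  rw [mem_erase] at hw
  simp only [neighborNoncliques, mem_filter, mem_powersetCard]
  refine ⟨⟨fun x hx ↦ ?_, ?_⟩, fun hy ↦ ?_⟩
  · rw [mem_erase] at hx
    rw [SimpleGraph.mem_neighborFinset]
    obtain rfl | hxz := eq_or_ne x z
    · exact hzy.symm
    · exact hclique (by simp [hyS, hzy.ne']) (by simp [hx.2, hxz]) hx.1.symm
  · rw [card_erase_of_mem hyS, ← hcard, card_erase_of_mem hzS]
  · obtain rfl | rfl := eq_or_eq_of_isClique_erase hzS hw.2 hw.1.symm hzw hy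
    · exact G.irrefl hzy
    · exact hzw hzy

theorem not_adj_iff_eq_of_erase_mem_straddlingCliques {z' w : V} (hzS : z ∈ S)
    (hz : S.erase z ∈ straddlingCliques G t z) (hz' : G.IsClique (S.erase z' : Set V))
    (hzz' : z ≠ z') (hwS : w ∈ S) (hwz : w ≠ z) : ¬ G.Adj z w ↔ w = z' := by
  have eq_of_not_adj {x : V} (hxS : x ∈ S) (hxz : x ≠ z) (hzx : ¬ G.Adj z x) : x = z' :=
    ((eq_or_eq_of_isClique_erase hzS hxS hxz.symm hzx hz').resolve_left hzz'.symm).symm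
  refine ⟨eq_of_not_adj hwS hwz, ?_⟩
  rintro rfl
  obtain ⟨-, -, x, hx, hzx⟩ := (mem_straddlingCliques_iff_of_notMem (notMem_erase z S)).1 hz
  rw [mem_erase] at hx
  exact eq_of_not_adj hx.2 hx.1 hzx ▸ hzx

theorem card_filter_erase_mem_straddlingCliques_le (ht : 3 ≤ t) (S : Finset V) :
    #{z ∈ S | S.erase z ∈ straddlingCliques G t z} ≤
      #{y ∈ S | S.erase y ∈ neighborNoncliques G t y} := by
  set A := {z ∈ S | S.erase z ∈ straddlingCliques G t z}
  set B := {y ∈ S | S.erase y ∈ neighborNoncliques G t y}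
  obtain hA0 | ⟨z, hzA⟩ := A.eq_empty_or_nonempty
  · simp [hA0]
  obtain ⟨hzS, hz⟩ := mem_filter.1 hzA
  have mem_B_of_adj {y : V} (hyS : y ∈ S) (hzy : G.Adj z y) : y ∈ B :=
    mem_filter.2 ⟨hyS, erase_mem_neighborNoncliques hzS hz hyS hzy⟩
  have hclique {u : V} (hu : u ∈ A) : G.IsNClique t (S.erase u) :=
    ((mem_straddlingCliques_iff_of_notMem (notMem_erase u S)).1 (mem_filter.1 hu).2).1
  obtain hA1 | hA1 := le_or_gt #A 1
  · obtain ⟨-, ⟨y, hy, hzy⟩, -⟩ := (mem_straddlingCliques_iff_of_notMem (notMem_erase z S)).1 hz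
    exact hA1.trans (card_pos.2 ⟨y, mem_B_of_adj (mem_of_mem_erase hy) hzy⟩)
  -- Now `z` has exactly one non-neighbor `z'` in `S`, so `A = {z, z'}` and `B ⊇ S \ {z, z'}`.
  obtain ⟨z', hz'A, hz'z⟩ := exists_mem_ne hA1 z
  have hz'S : z' ∈ S := (mem_filter.1 hz'A).1
  have not_adj_iff {w : V} (hwS : w ∈ S) (hwz : w ≠ z) : ¬ G.Adj z w ↔ w = z' :=
    not_adj_iff_eq_of_erase_mem_straddlingCliques hzS hz (hclique hz'A).isClique hz'z.symm hwS hwz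
  have hA_sub : A ⊆ {z, z'} := fun u hu ↦ by
    simpa using eq_or_eq_of_isClique_erase hzS hz'S hz'z.symm ((not_adj_iff hz'S hz'z).2 rfl)
      (hclique hu).isClique
  have hB_sup : S \ {z, z'} ⊆ B := fun y hy ↦ by
    simp only [mem_sdiff, mem_insert, mem_singleton, not_or] at hy
    exact mem_B_of_adj hy.1 (not_not.1 (mt (not_adj_iff hy.1 hy.2.1).1 hy.2.2))
  have hS : #S = t + 1 := by rw [← (hclique hzA).card_eq, card_erase_add_one hzS]
  calc #A ≤ 2 := (card_le_card hA_sub).trans card_le_two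
    _ ≤ #S - #{z, z'} := by rw [card_pair hz'z.symm]; omega
    _ ≤ #(S \ {z, z'}) := le_card_sdiff _ _
    _ ≤ #B := card_le_card hB_sup

theorem sum_card_straddlingCliques_le (ht : 3 ≤ t) :
    ∑ v, #(straddlingCliques G t v) ≤ ∑ v, #(neighborNoncliques G t v) := by
  rw [sum_card_eq_sum_card_filter_erase_mem fun _ _ ↦ notMem_of_mem_straddlingCliques,
    sum_card_eq_sum_card_filter_erase_mem fun _ _ ↦ notMem_of_mem_neighborNoncliques]
  exact sum_le_sum fun S _ ↦ card_filter_erase_mem_straddlingCliques_le ht S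

variable (G t v)

theorem card_cliques_not_disjoint_le :
    #{T ∈ G.cliqueFinset t | ¬ Disjoint T (closedNeighborFinset G v)} ≤
      #{T ∈ G.cliqueFinset t | T ⊆ closedNeighborFinset G v} + #(straddlingCliques G t v) := by
  refine (card_le_card fun T hT ↦ ?_).trans (card_union_le _ _)
  simp only [straddlingCliques, mem_union, mem_filter] at hT ⊢
  tauto

theorem card_cliques_subset_add_card_neighborNoncliques_le :
    #{T ∈ G.cliqueFinset t | T ⊆ closedNeighborFinset G v} + #(neighborNoncliques G t v) ≤
      (G.degree v + 1).choose t := by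
  rw [← card_closedNeighborFinset, ← card_powersetCard,
    ← card_filter_add_card_filter_not (s := powersetCard t _)
      fun T : Finset V ↦ G.IsClique (T : Set V)]
  refine add_le_add (card_le_card fun T hT ↦ ?_) (card_le_card ?_)
  · simp only [mem_filter, SimpleGraph.mem_cliqueFinset_iff, mem_powersetCard] at hT ⊢
    exact ⟨⟨hT.2, hT.1.card_eq⟩, hT.1.isClique⟩
  · exact filter_subset_filter _ (powersetCard_mono (subset_insert _ _))

theorem exists_card_cliques_not_disjoint_le_choose [Nonempty V] (ht : 3 ≤ t) :
    ∃ v, #{T ∈ G.cliqueFinset t | ¬ Disjoint T (closedNeighborFinset G v)} ≤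
      (G.degree v + 1).choose t := by
  suffices ∑ v, #{T ∈ G.cliqueFinset t | ¬ Disjoint T (closedNeighborFinset G v)} ≤
      ∑ v, (G.degree v + 1).choose t by
    obtain ⟨v, -, hv⟩ := exists_le_of_sum_le univ_nonempty this
    exact ⟨v, hv⟩
  calc ∑ v, #{T ∈ G.cliqueFinset t | ¬ Disjoint T (closedNeighborFinset G v)}
    _ ≤ ∑ v, (#{T ∈ G.cliqueFinset t | T ⊆ closedNeighborFinset G v} +
          #(straddlingCliques G t v)) :=
        sum_le_sum fun v _ ↦ card_cliques_not_disjoint_le G t v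
    _ ≤ ∑ v, (#{T ∈ G.cliqueFinset t | T ⊆ closedNeighborFinset G v} +
          #(neighborNoncliques G t v)) := by
        simp only [sum_add_distrib]
        exact Nat.add_le_add_left (sum_card_straddlingCliques_le ht) _
    _ ≤ ∑ v, (G.degree v + 1).choose t :=
        sum_le_sum fun v _ ↦ card_cliques_subset_add_card_neighborNoncliques_le G t v

theorem card_cliqueFinset_induce (s : Finset V) :
    #((G.induce (s : Set V)).cliqueFinset t) = #{T ∈ G.cliqueFinset t | T ⊆ s} := by
  rw [← card_map ⟨Finset.map (.subtype (· ∈ (s : Set V))), map_injective _⟩]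
  congr 1
  ext T
  simp only [mem_map, mem_filter, SimpleGraph.mem_cliqueFinset_iff,
    SimpleGraph.isNClique_induce_iff, Function.Embedding.coeFn_mk]
  constructor
  · rintro ⟨U, hU, rfl⟩
    exact ⟨hU, coe_subset.1 (map_subtype_subset U)⟩
  · rintro ⟨hT, hTs⟩
    have hmap : (T.subtype (· ∈ (s : Set V))).map (.subtype _) = T :=
      subtype_map_of_mem fun x hx ↦ hTs hx
    exact ⟨_, hmap.symm ▸ hT, hmap⟩

theorem exists_card_cliqueFinset_le_choose_add [Nonempty V] (ht : 3 ≤ t) :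
    ∃ v, #(G.cliqueFinset t) ≤ (G.degree v + 1).choose t +
      #((G.induce ((closedNeighborFinset G v)ᶜ : Finset V)).cliqueFinset t) := by
  obtain ⟨v, hv⟩ := exists_card_cliques_not_disjoint_le_choose G t ht
  refine ⟨v, ?_⟩
  simp only [card_cliqueFinset_induce, subset_compl_iff_disjoint_right]
  rw [← card_filter_add_card_filter_not fun T ↦ Disjoint T (closedNeighborFinset G v)]
  omega

theorem card_cliqueFinset_le_cliqueUnionCount {Δ : ℕ} (ht : 3 ≤ t) (hΔ : ∀ v, G.degree v ≤ Δ) :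
    #(G.cliqueFinset t) ≤ cliqueUnionCount (Δ + 1) t (Fintype.card V) := by
  induction hn : Fintype.card V using Nat.strong_induction_on generalizing V with
  | _ n ih
  obtain hV | hV := isEmpty_or_nonempty V
  · have := G.card_cliqueFinset_le (n := t)
    rw [Fintype.card_eq_zero, Nat.choose_eq_zero_of_lt (by omega)] at this
    omega
  obtain ⟨v, hv⟩ := exists_card_cliqueFinset_le_choose_add G t ht
  set R : Finset V := (closedNeighborFinset G v)ᶜ
  have hR : #R + (G.degree v + 1) = n := by
    rw [← card_closedNeighborFinset, card_compl_add_card, hn]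
  have hdeg (u : R) : (G.induce (R : Set V)).degree u ≤ Δ :=
    ((SimpleGraph.Copy.induce G R).degree_le u).trans (hΔ u)
  calc #(G.cliqueFinset t)
    _ ≤ (G.degree v + 1).choose t + #((G.induce (R : Set V)).cliqueFinset t) := hv
    _ ≤ (G.degree v + 1).choose t + cliqueUnionCount (Δ + 1) t #R :=
        Nat.add_le_add_left (ih #R (by omega) _ hdeg (Fintype.card_coe R)) _
    _ ≤ cliqueUnionCount (Δ + 1) t (#R + (G.degree v + 1)) :=
        choose_add_cliqueUnionCount_le (by omega) (Nat.succ_le_succ (hΔ v)) _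
    _ = cliqueUnionCount (Δ + 1) t n := by rw [hR]

end Cliques

/-- **GLS Conjecture / Theorem.** Any simple graph on `n` vertices with maximum degree at most
`Δ` has at most `a * (Δ+1).choose t + b.choose t` cliques of size `t ≥ 3`, where
`n = a * (Δ+1) + b` with `0 ≤ b ≤ Δ`. -/
theorem stmt_0 {V : Type*} [Fintype V] [DecidableEq V] (G : SimpleGraph V) [DecidableRel G.Adj]
    (Δ : ℕ) (hΔ : ∀ v : V, G.degree v ≤ Δ) (t : ℕ) (ht : 3 ≤ t)
    (a b : ℕ) (hb : b ≤ Δ) (hn : Fintype.card V = a * (Δ + 1) + b) :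
    (G.cliqueFinset t).card ≤ a * (Δ + 1).choose t + b.choose t := by
  rw [← cliqueUnionCount_mul_add (Nat.lt_succ_of_le hb), ← hn]
  exact card_cliqueFinset_le_cliqueUnionCount G t ht hΔ
end

section
/- For any integer $t \ge 3$ and any finite simple graph $G = G(V,E)$, one has $\sum_{v \in V} |T_v| \le \sum_{v \in V} \binom{\deg(v)+1}{t}$, where $T_v$ is the set of all $t$-cliques of $G$ intersecting the closed neighborhood of $v$. -/
/-!
Pascal's rule splits `(deg v + 1).choose t` into `(deg v).choose (t - 1) + (deg v).choose t`. The
`t`-cliques through `v` are accounted for by the first summand. A `t`-clique `K` missing `v` but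
meeting its neighborhood is encoded by the `(t + 1)`-set `S = K ∪ {v}`, so these are handled, after
exchanging the order of summation, by a comparison inside each `S`: the vertices attached to a
clique on the rest of `S` are at most as many as those adjacent to all the rest of `S`, and pairs
`(v, S)` of the latter kind are counted by `∑ v, (deg v).choose t`. For `t = 2` the comparison fails
on the path with three vertices.
-/

open Finset

section DoubleCounting

variable {α ι : Type*} [DecidableEq α]

theorem sum_card_filter_mem_eq_sum_card [Fintype α] (U : Finset ι) (f : ι → Finset α) :
    ∑ a : α, #{i ∈ U | a ∈ f i} = ∑ i ∈ U, #(f i) := by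
  simpa [bipartiteAbove, bipartiteBelow] using
    sum_card_bipartiteAbove_eq_sum_card_bipartiteBelow (s := univ) (t := U) fun a i ↦ a ∈ f i

theorem card_filter_powersetCard_mem_and_erase {U : Finset α} {a : α} (ha : a ∈ U) (k : ℕ)
    (p : Finset α → Prop) [DecidablePred p] :
    #{S ∈ powersetCard (k + 1) U | a ∈ S ∧ p (S.erase a)} =
      #{s ∈ powersetCard k (U.erase a) | p s} := by
  refine card_nbij' (erase · a) (insert a) ?_ ?_ ?_ ?_
  · simp only [Set.MapsTo, coe_filter, mem_powersetCard, Set.mem_ofPred_eq]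
    rintro S ⟨⟨hSU, hcard⟩, haS, hp⟩
    exact ⟨⟨erase_subset_erase a hSU, by simp [card_erase_of_mem haS, hcard]⟩, hp⟩
  · simp only [Set.MapsTo, coe_filter, mem_powersetCard, Set.mem_ofPred_eq, subset_erase]
    rintro s ⟨⟨⟨hsU, has⟩, hcard⟩, hp⟩
    exact ⟨⟨insert_subset ha hsU, by simp [has, hcard]⟩, mem_insert_self a s, by
      rwa [erase_insert has]⟩
  · intro S hS
    exact insert_erase (mem_filter.1 hS).2.1
  · intro s hs
    exact erase_insert (subset_erase.1 (mem_powersetCard.1 (mem_filter.1 hs).1).1).2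

end DoubleCounting

section LocalComparison

variable {V : Type*} [DecidableEq V] {G : SimpleGraph V} {S : Finset V} {u v w : V}

theorem adj_of_isClique_erase (hv : G.IsClique (S.erase v : Finset V)) (hu : u ∈ S) (hw : w ∈ S)
    (huv : u ≠ v) (hwv : w ≠ v) (huw : u ≠ w) : G.Adj u w :=
  hv (mem_erase.2 ⟨huv, hu⟩) (mem_erase.2 ⟨hwv, hw⟩) huw

variable (G) [DecidableRel G.Adj]

/-- The vertices of `S` that are adjacent to all the other vertices of `S`, i.e. the dominating
(universal) vertices of the subgraph induced on `S`. -/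
def dominatingVertices (S : Finset V) : Finset V :=
  {v ∈ S | ∀ u ∈ S.erase v, G.Adj v u}

/-- The vertices `v` of `S` such that `S` consists of `v` and of a clique containing at least one
neighbor of `v`. The pairs `(v, S)` encode the cliques that meet the closed neighborhood of `v`
without containing `v`. -/
def cliqueAttachments (S : Finset V) : Finset V :=
  {v ∈ S | G.IsClique (S.erase v : Finset V) ∧ ∃ u ∈ S.erase v, G.Adj v u}

variable {G}

theorem dominatingVertices_eq_self (hS : G.IsClique S) : dominatingVertices G S = S :=
  filter_true_of_mem fun _ hv _ hu ↦ hS hv (mem_of_mem_erase hu) (ne_of_mem_erase hu).symm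

theorem mem_dominatingVertices_of_isClique_erase (hv : G.IsClique (S.erase v : Finset V))
    (hu : u ∈ S) (huv : G.Adj u v) : u ∈ dominatingVertices G S := by
  refine mem_filter.2 ⟨hu, fun w hw ↦ ?_⟩
  obtain ⟨hwu, hwS⟩ := mem_erase.1 hw
  obtain rfl | hwv := eq_or_ne w v
  · exact huv
  · exact adj_of_isClique_erase hv hu hwS huv.ne hwv hwu.symm

theorem dominatingVertices_nonempty_of_cliqueAttachments_nonempty
    (h : (cliqueAttachments G S).Nonempty) : (dominatingVertices G S).Nonempty := by
  obtain ⟨v, hv⟩ := h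
  obtain ⟨-, hclique, u, hu, hvu⟩ := mem_filter.1 hv
  exact ⟨u, mem_dominatingVertices_of_isClique_erase hclique (mem_of_mem_erase hu) hvu.symm⟩

theorem sdiff_pair_subset_dominatingVertices (hvS : v ∈ S) (hvw : v ≠ w)
    (hv : G.IsClique (S.erase v : Finset V)) (hw : G.IsClique (S.erase w : Finset V)) :
    S \ {v, w} ⊆ dominatingVertices G S := by
  intro z hz
  simp only [mem_sdiff, mem_insert, mem_singleton, not_or] at hz
  obtain ⟨hzS, hzv, hzw⟩ := hz
  exact mem_dominatingVertices_of_isClique_erase hv hzS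
    (adj_of_isClique_erase hw hzS hvS hzw hvw hzv)

theorem cliqueAttachments_subset_pair (hv : v ∈ S) (hw : w ∈ S) (hvw : v ≠ w)
    (hadj : ¬G.Adj v w) : cliqueAttachments G S ⊆ {v, w} := by
  intro z hz
  by_contra hz_pair
  simp only [mem_insert, mem_singleton, not_or] at hz_pair
  exact hadj (adj_of_isClique_erase (mem_filter.1 hz).2.1 hv hw (Ne.symm hz_pair.1)
    (Ne.symm hz_pair.2) hvw)

theorem card_cliqueAttachments_le_card_dominatingVertices (hS : 4 ≤ #S) :
    #(cliqueAttachments G S) ≤ #(dominatingVertices G S) := by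
  by_cases hclique : G.IsClique S
  · rw [dominatingVertices_eq_self hclique]
    exact card_filter_le _ _
  obtain hle | hlt := le_or_gt #(cliqueAttachments G S) 1
  · obtain hempty | hne := (cliqueAttachments G S).eq_empty_or_nonempty
    · simp [hempty]
    · exact hle.trans (dominatingVertices_nonempty_of_cliqueAttachments_nonempty hne).card_pos
  obtain ⟨v, hv, w, hw, hvw⟩ := one_lt_card.1 hlt
  obtain ⟨hvS, hv_clique, -⟩ := mem_filter.1 hv
  obtain ⟨-, hw_clique, -⟩ := mem_filter.1 hw
  have hpair : #(cliqueAttachments G S) ≤ 2 := by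
    simp only [SimpleGraph.IsClique, Set.Pairwise, not_forall] at hclique
    obtain ⟨x, hx, y, hy, hxy, hadj⟩ := hclique
    exact (card_le_card (cliqueAttachments_subset_pair hx hy hxy hadj)).trans card_le_two
  calc #(cliqueAttachments G S) ≤ 2 := hpair
    _ ≤ #S - #{v, w} := by rw [card_pair hvw]; omega
    _ ≤ #(S \ {v, w}) := le_card_sdiff _ _
    _ ≤ #(dominatingVertices G S) :=
      card_le_card (sdiff_pair_subset_dominatingVertices hvS hvw hv_clique hw_clique)

end LocalComparison

section CountingAtVertex

variable {V : Type*} [Fintype V] [DecidableEq V] (G : SimpleGraph V) [DecidableRel G.Adj]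

theorem card_filter_mem_dominatingVertices (v : V) (k : ℕ) :
    #{S ∈ powersetCard (k + 1) univ | v ∈ dominatingVertices G S} = (G.degree v).choose k := by
  simp only [dominatingVertices, mem_filter]
  rw [card_filter_powersetCard_mem_and_erase (mem_univ v) k fun s ↦ ∀ u ∈ s, G.Adj v u,
    ← G.card_neighborFinset_eq_degree, ← card_powersetCard]
  congr 1
  ext s
  simp only [mem_filter, mem_powersetCard, subset_iff, mem_erase, mem_univ, and_true,
    SimpleGraph.mem_neighborFinset]
  exact ⟨fun h ↦ ⟨h.2, h.1.2⟩, fun h ↦ ⟨⟨fun u hu ↦ (h.1 u hu).ne', h.2⟩, h.1⟩⟩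

theorem card_filter_mem_cliqueAttachments (v : V) (t : ℕ) :
    #{S ∈ powersetCard (t + 1) univ | v ∈ cliqueAttachments G S} =
      #{s ∈ G.cliqueFinset t | v ∉ s ∧ ∃ u ∈ s, G.Adj v u} := by
  simp only [cliqueAttachments, mem_filter]
  rw [card_filter_powersetCard_mem_and_erase (mem_univ v) t
    fun s ↦ G.IsClique s ∧ ∃ u ∈ s, G.Adj v u]
  congr 1
  ext s
  simp only [mem_filter, mem_powersetCard, subset_erase, subset_univ, true_and,
    SimpleGraph.mem_cliqueFinset_iff, SimpleGraph.isNClique_iff]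
  tauto

theorem card_cliqueFinset_filter_mem_le (v : V) (k : ℕ) :
    #{s ∈ G.cliqueFinset (k + 1) | v ∈ s} ≤ (G.degree v).choose k := by
  rw [← card_filter_mem_dominatingVertices]
  refine card_le_card fun s hs ↦ ?_
  obtain ⟨hs_mem, hv⟩ := mem_filter.1 hs
  obtain ⟨hclique, hcard⟩ := SimpleGraph.mem_cliqueFinset_iff.1 hs_mem
  exact mem_filter.2 ⟨mem_powersetCard_univ.2 hcard, by rwa [dominatingVertices_eq_self hclique]⟩

theorem card_cliques_meeting_closed_neighborhood_le (v : V) (k : ℕ) :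
    #{s ∈ G.cliqueFinset (k + 1) | (s ∩ insert v (G.neighborFinset v)).Nonempty} ≤
      (G.degree v).choose k + #{S ∈ powersetCard (k + 2) univ | v ∈ cliqueAttachments G S} := by
  rw [card_filter_mem_cliqueAttachments]
  refine le_trans (card_le_card fun s hs ↦ ?_) ((card_union_le _ _).trans
    (Nat.add_le_add_right (card_cliqueFinset_filter_mem_le G v k) _))
  obtain ⟨hclique, u, hu⟩ := mem_filter.1 hs
  simp only [mem_inter, mem_insert, SimpleGraph.mem_neighborFinset] at hu
  by_cases hv : v ∈ s
  · exact mem_union_left _ (mem_filter.2 ⟨hclique, hv⟩)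
  · have hvu : G.Adj v u := hu.2.resolve_left fun huv ↦ hv (huv ▸ hu.1)
    exact mem_union_right _ (mem_filter.2 ⟨hclique, hv, u, hu.1, hvu⟩)

theorem sum_card_filter_mem_cliqueAttachments_le {t : ℕ} (ht : 3 ≤ t) :
    ∑ v : V, #{S ∈ powersetCard (t + 1) univ | v ∈ cliqueAttachments G S} ≤
      ∑ v : V, (G.degree v).choose t := by
  simp only [← card_filter_mem_dominatingVertices, sum_card_filter_mem_eq_sum_card]
  refine sum_le_sum fun S hS ↦ card_cliqueAttachments_le_card_dominatingVertices ?_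
  rw [mem_powersetCard_univ.1 hS]
  omega

end CountingAtVertex

/-- For a finite simple graph `G` and `t ≥ 3`,
`∑_{v ∈ V} |T_v| ≤ ∑_{v ∈ V} (deg v + 1).choose t`, where `T_v` is the set of `t`-cliques of `G`
intersecting the closed neighborhood of `v`. -/
theorem stmt_1 {V : Type*} [Fintype V] [DecidableEq V] (G : SimpleGraph V) [DecidableRel G.Adj]
    (t : ℕ) (ht : 3 ≤ t) :
    ∑ v : V, ((G.cliqueFinset t).filter
        (fun s => (s ∩ insert v (G.neighborFinset v)).Nonempty)).card
      ≤ ∑ v : V, (G.degree v + 1).choose t := by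
  obtain ⟨k, rfl⟩ := Nat.exists_eq_add_of_le' (Nat.one_le_of_lt ht)
  calc
    _ ≤ ∑ v : V, ((G.degree v).choose k +
          #{S ∈ powersetCard (k + 2) univ | v ∈ cliqueAttachments G S}) :=
      sum_le_sum fun v _ ↦ card_cliques_meeting_closed_neighborhood_le G v k
    _ ≤ ∑ v : V, (G.degree v).choose k + ∑ v : V, (G.degree v).choose (k + 1) := by
      rw [sum_add_distrib]
      exact Nat.add_le_add_left (sum_card_filter_mem_cliqueAttachments_le G ht) _
    _ = ∑ v : V, (G.degree v + 1).choose (k + 1) := by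
      simp only [Nat.choose_succ_succ', sum_add_distrib]
end

section
/- Let $t \ge 3$ be an integer and let $H$ be a simple graph on $t+1$ vertices that is connected and contains a $t$-clique with vertex set $\{z_1, \dotsc, z_t\}$; let $z^*$ be the remaining vertex, and suppose $z^*$ is adjacent to exactly $k$ of the vertices $z_1, \dotsc, z_t$ with $1 \le k \le t-2$. Then the number of tuples $(u, x_1, \dotsc, x_t)$ of pairwise distinct vertices of $H$ such that $x_1, \dotsc, x_t$ form a $t$-clique in $H$ and $u$ is adjacent to some $x_i$ equals $t!$, while the number of tuples $(w, y_1, \dotsc, y_t)$ of pairwise distinct vertices of $H$ such that $w$ is adjacent to all $y_i$ and some $t-1$ of the $y_i$ form a $(t-1)$-clique in $H$ equals $k \cdot t!$. -/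
/-!
Write `v` for the vertex outside the given clique. In a tuple of `t + 1` distinct vertices the last
`t` entries exhaust the complement of the first one, so whether a tuple counts depends only on its
first entry `a`, and each admissible `a` contributes `t!` tuples.

For `Φ`, the complement of `a` has to be a clique. If `a ≠ v`, then `v` lies in that clique and has
at least `t - 1` neighbours, contrary to `k ≤ t - 2`; so only `a = v` is admissible. For `Ω`, the
vertex `a` has to be universal. As `v` is not universal and the complement of `v` is a clique, the
universal vertices are exactly the `k` neighbours of `v`.
-/

open Finset

section Tuples

variable {α : Type*} [Fintype α]

theorem range_eq_compl_singleton_of_injective_cons {n : ℕ} (hα : Fintype.card α = n + 1) {a : α}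
    {f : Fin n → α} (hf : Function.Injective (Fin.cons a f : Fin (n + 1) → α)) :
    Set.range f = {a}ᶜ := by
  have hsurj : Function.Surjective (Fin.cons a f : Fin (n + 1) → α) :=
    ((Fintype.bijective_iff_injective_and_card _).2 ⟨hf, by simp [hα]⟩).surjective
  have hinsert : insert a (Set.range f) = Set.univ := by rw [← Fin.range_cons, hsurj.range_eq]
  have ha : a ∉ Set.range f := (Fin.cons_injective_iff.1 hf).1
  rw [← Set.insert_sdiff_self_of_notMem ha, hinsert, Set.compl_eq_univ_sdiff]

variable [DecidableEq α]

theorem card_filter_injective_cons (n : ℕ) (a : α) :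
    #{f : Fin n → α | Function.Injective (Fin.cons a f : Fin (n + 1) → α)}
      = (Fintype.card α - 1).descFactorial n := by
  let e : {f : Fin n → α // Function.Injective (Fin.cons a f : Fin (n + 1) → α)} ≃
      (Fin n ↪ {x // x ≠ a}) :=
    { toFun f := ⟨fun i ↦ ⟨f.1 i, fun h ↦ (Fin.cons_injective_iff.1 f.2).1 ⟨i, h⟩⟩,
        fun _ _ h ↦ (Fin.cons_injective_iff.1 f.2).2 (congrArg Subtype.val h)⟩
      invFun g := ⟨fun i ↦ g i, Fin.cons_injective_iff.2
        ⟨fun ⟨i, hi⟩ ↦ (g i).2 hi, Subtype.val_injective.comp g.injective⟩⟩ }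
  rw [← Fintype.card_subtype, Fintype.card_congr e, Fintype.card_embedding_eq, Fintype.card_fin,
    Fintype.card_subtype_compl, Fintype.card_subtype_eq]

theorem card_filter_injective_cons_and_mem (n : ℕ) (A : Finset α) :
    #{p : α × (Fin n → α) |
        Function.Injective (Fin.cons p.1 p.2 : Fin (n + 1) → α) ∧ p.1 ∈ A}
      = #A * (Fintype.card α - 1).descFactorial n := by
  calc
    _ = ∑ a, ∑ f : Fin n → α,
          if a ∈ A ∧ Function.Injective (Fin.cons a f : Fin (n + 1) → α) then 1 else 0 := by
      simp only [card_filter, Fintype.sum_prod_type, and_comm]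
    _ = ∑ a ∈ A, #{f : Fin n → α | Function.Injective (Fin.cons a f : Fin (n + 1) → α)} := by
      simp only [ite_and, sum_ite_irrel, sum_const_zero, sum_ite_mem, univ_inter, card_filter]
    _ = #A * (Fintype.card α - 1).descFactorial n := by
      simp only [card_filter_injective_cons, sum_const, smul_eq_mul]

end Tuples

section NearClique

variable {W : Type*} {H : SimpleGraph W} {v a : W}

theorem isUniversal_iff_adj_of_isClique_compl_singleton (hv : H.IsClique {v}ᶜ)
    (hvu : ¬ H.IsUniversal v) : H.IsUniversal a ↔ H.Adj v a := by
  refine ⟨fun ha ↦ ?_, fun hva x hax ↦ ?_⟩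
  · have hav : a ≠ v := fun h ↦ hvu (h ▸ ha)
    exact (ha hav).symm
  · obtain rfl | hxv := eq_or_ne x v
    · exact hva.symm
    · exact hv hva.ne' hxv hax

variable [Fintype W]

theorem card_le_degree_add_two_of_isClique_compl_singleton [DecidableRel H.Adj]
    (ha : H.IsClique {a}ᶜ) (hva : v ≠ a) : Fintype.card W ≤ H.degree v + 2 := by
  classical
  have hsub : ({v, a}ᶜ : Finset W) ⊆ H.neighborFinset v := fun x hx ↦ by
    simp only [mem_compl, mem_insert, mem_singleton, not_or] at hx
    exact (H.mem_neighborFinset v x).2 (ha hva hx.2 (Ne.symm hx.1))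
  have hcard := card_le_card hsub
  rw [card_compl, card_pair hva, H.card_neighborFinset_eq_degree] at hcard
  omega

theorem isClique_compl_singleton_iff_eq [DecidableRel H.Adj] (hv : H.IsClique {v}ᶜ)
    (hdeg : H.degree v + 2 < Fintype.card W) : H.IsClique {a}ᶜ ↔ a = v := by
  refine ⟨fun ha ↦ ?_, fun h ↦ h ▸ hv⟩
  by_contra hav
  exact hdeg.not_ge (card_le_degree_add_two_of_isClique_compl_singleton ha (Ne.symm hav))

theorem exists_isNClique_subset_compl_singleton [DecidableEq W] (hv : H.IsClique {v}ᶜ)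
    (hva : v ≠ a) : ∃ s ⊆ ({a}ᶜ : Finset W), H.IsNClique (Fintype.card W - 2) s := by
  refine ⟨{v, a}ᶜ, by simp, hv.subset (by simp), ?_⟩
  rw [card_compl, card_pair hva]

end NearClique

section Enumeration

variable {W ι : Type*} {H : SimpleGraph W} {a : W} {f : ι → W}

theorem forall_adj_iff_isUniversal_of_range_eq (hf : Set.range f = {a}ᶜ) :
    (∀ i, H.Adj a (f i)) ↔ H.IsUniversal a := by
  have hmem (x : W) : (∃ i, f i = x) ↔ a ≠ x := by
    simpa [eq_comm] using Set.ext_iff.1 hf x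
  simp only [SimpleGraph.IsUniversal, ← hmem, forall_exists_index, forall_apply_eq_imp_iff]

theorem exists_adj_iff_not_isIsolated (hf : H.neighborSet a ⊆ Set.range f) :
    (∃ i, H.Adj a (f i)) ↔ ¬ H.IsIsolated a := by
  simp only [SimpleGraph.IsIsolated, not_forall, not_not]
  refine ⟨fun ⟨i, hi⟩ ↦ ⟨f i, hi⟩, fun ⟨x, hx⟩ ↦ ?_⟩
  obtain ⟨i, rfl⟩ := hf hx
  exact ⟨i, hx⟩

variable [Fintype ι]

theorem card_filter_adj_eq_degree [DecidablePred fun i ↦ H.Adj a (f i)]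
    [Fintype (H.neighborSet a)] (hinj : Function.Injective f)
    (hf : H.neighborSet a ⊆ Set.range f) :
    #{i | H.Adj a (f i)} = H.degree a := by
  refine card_nbij f (fun i hi ↦ by simpa using hi) hinj.injOn fun x hx ↦ ?_
  have hax : H.Adj a x := by simpa using hx
  obtain ⟨i, rfl⟩ := hf hax
  exact ⟨i, by simpa using hax, rfl⟩

variable [Fintype W] [DecidableEq W]

theorem image_univ_eq_compl_singleton_of_range_eq (hf : Set.range f = {a}ᶜ) :
    univ.image f = {a}ᶜ := by
  rw [← coe_inj, coe_image, coe_univ, Set.image_univ, hf, coe_compl, coe_singleton]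

theorem isNClique_image_iff_of_range_eq {n : ℕ} (hW : Fintype.card W = n + 1)
    (hf : Set.range f = {a}ᶜ) :
    H.IsNClique n (univ.image f) ↔ H.IsClique {a}ᶜ := by
  rw [image_univ_eq_compl_singleton_of_range_eq hf, H.isNClique_iff, card_compl, card_singleton,
    coe_compl, coe_singleton, hW, Nat.add_sub_cancel, and_iff_left rfl]

end Enumeration

section Counting

variable {W : Type*} [Fintype W] [DecidableEq W] {H : SimpleGraph W} [DecidableRel H.Adj]
  {n : ℕ} {v : W}

theorem card_filter_isNClique_and_exists_adj (hW : Fintype.card W = n + 1) (hv : H.IsClique {v}ᶜ)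
    (hiso : ¬ H.IsIsolated v) (hdeg : H.degree v + 2 < Fintype.card W) :
    #{p : W × (Fin n → W) | Function.Injective (Fin.cons p.1 p.2 : Fin (n + 1) → W) ∧
        H.IsNClique n (univ.image p.2) ∧ ∃ i, H.Adj p.1 (p.2 i)} = n.factorial := by
  calc
    _ = #{p : W × (Fin n → W) |
          Function.Injective (Fin.cons p.1 p.2 : Fin (n + 1) → W) ∧ p.1 ∈ ({v} : Finset W)} := by
      refine congrArg card (filter_congr fun p _ ↦ and_congr_right fun hp ↦ ?_)
      have hrange := range_eq_compl_singleton_of_injective_cons hW hp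
      rw [isNClique_image_iff_of_range_eq hW hrange,
        exists_adj_iff_not_isIsolated (hrange ▸ H.neighborSet_subset_compl p.1),
        isClique_compl_singleton_iff_eq hv hdeg, mem_singleton]
      exact and_iff_left_of_imp fun h ↦ h ▸ hiso
    _ = n.factorial := by
      rw [card_filter_injective_cons_and_mem, card_singleton, one_mul, hW, Nat.add_sub_cancel,
        Nat.descFactorial_self]

theorem card_filter_forall_adj_and_exists_isNClique (hW : Fintype.card W = n + 1)
    (hv : H.IsClique {v}ᶜ) (hvu : ¬ H.IsUniversal v) :
    #{p : W × (Fin n → W) | Function.Injective (Fin.cons p.1 p.2 : Fin (n + 1) → W) ∧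
        (∀ i, H.Adj p.1 (p.2 i)) ∧ ∃ s ⊆ univ.image p.2, H.IsNClique (n - 1) s}
      = H.degree v * n.factorial := by
  calc
    _ = #{p : W × (Fin n → W) |
          Function.Injective (Fin.cons p.1 p.2 : Fin (n + 1) → W) ∧
            p.1 ∈ H.neighborFinset v} := by
      refine congrArg card (filter_congr fun p _ ↦ and_congr_right fun hp ↦ ?_)
      have hrange := range_eq_compl_singleton_of_injective_cons hW hp
      rw [forall_adj_iff_isUniversal_of_range_eq hrange,
        isUniversal_iff_adj_of_isClique_compl_singleton hv hvu,
        image_univ_eq_compl_singleton_of_range_eq hrange, H.mem_neighborFinset]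
      refine and_iff_left_of_imp fun h ↦ ?_
      simpa [hW] using exists_isNClique_subset_compl_singleton hv h.ne
    _ = H.degree v * n.factorial := by
      rw [card_filter_injective_cons_and_mem, H.card_neighborFinset_eq_degree, hW,
        Nat.add_sub_cancel, Nat.descFactorial_self]

end Counting

/-- Case `1 ≤ k ≤ t-2`: if `H` is a connected graph on `t+1` vertices containing a `t`-clique
`{z_1, …, z_t}` whose remaining vertex `z*` is adjacent to exactly `k` of the `z_i` with
`1 ≤ k ≤ t-2`, then `H` contributes `t!` good `Φ`-tuples and `k * t!` good `Ω`-tuples. -/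
theorem stmt_8 {W : Type*} [Fintype W] [DecidableEq W] (H : SimpleGraph W) [DecidableRel H.Adj]
    (t : ℕ) (ht : 3 ≤ t) (hW : Fintype.card W = t + 1) (hconn : H.Connected)
    (z : Fin t → W) (hz : H.IsNClique t (Finset.univ.image z))
    (zs : W) (hzs : zs ∉ Finset.univ.image z)
    (k : ℕ) (hk1 : 1 ≤ k) (hk2 : k ≤ t - 2)
    (hdeg : (Finset.univ.filter (fun i : Fin t => H.Adj zs (z i))).card = k) :
    (Finset.univ.filter (fun p : W × (Fin t → W) =>
        Function.Injective (Fin.cons p.1 p.2 : Fin (t + 1) → W) ∧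
        H.IsNClique t (Finset.univ.image p.2) ∧ ∃ i : Fin t, H.Adj p.1 (p.2 i))).card
      = t.factorial
    ∧ (Finset.univ.filter (fun p : W × (Fin t → W) =>
        Function.Injective (Fin.cons p.1 p.2 : Fin (t + 1) → W) ∧
        (∀ i : Fin t, H.Adj p.1 (p.2 i)) ∧
        ∃ s ⊆ Finset.univ.image p.2, H.IsNClique (t - 1) s)).card
      = k * t.factorial := by
  have hz_inj : Function.Injective z :=
    Set.injOn_univ.1 <| by simpa using card_image_iff.1 (hz.card_eq.trans (card_fin t).symm)
  have hz_range : Set.range z = {zs}ᶜ := range_eq_compl_singleton_of_injective_cons hW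
    (Fin.cons_injective_iff.2 ⟨by simpa using hzs, hz_inj⟩)
  have h_clique : H.IsClique {zs}ᶜ := by simpa [hz_range] using hz.isClique
  have h_degree : H.degree zs = k :=
    (card_filter_adj_eq_degree hz_inj (hz_range ▸ H.neighborSet_subset_compl zs)).symm.trans hdeg
  have h_not_isolated : ¬ H.IsIsolated zs := (H.degree_pos zs).1 (by omega)
  have h_not_universal : ¬ H.IsUniversal zs := (H.degree_lt_card_sub_one zs).1 (by omega)
  exact ⟨card_filter_isNClique_and_exists_adj hW h_clique h_not_isolated (by omega),
    h_degree ▸ card_filter_forall_adj_and_exists_isNClique hW h_clique h_not_universal⟩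
end
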